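/- Let λ, μ ∈ ℂ× be nonzero complex numbers. Then the identity φ(x, μz) = λ·φ(λ^{−1}x, z) holds in ℂ((x))[[z]] if and only if p(λx) = μ^{−1}λ·p(x) in ℂ((x)). -/

import Mathlib

/-!
Write `φ_p` for the series `φ` attached to `p`. Scaling the vector field scales time:
`φ_p(x, μz) = φ_{μp}(x, z)`. Changing the coordinate `x` by a factor `λ⁻¹` carries the vector field
`p(x) d/dx` to `λ p(λ⁻¹x) d/dx`, so `λ φ_p(λ⁻¹x, z) = φ_q(x, z)` with `q(x) = λ p(λ⁻¹x)`. Since `p`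
is the `z¹`-coefficient of `φ_p`, the two series agree exactly when `μ p(x) = λ p(λ⁻¹x)`.
-/

noncomputable section

open HahnSeries

/-- Formal derivative `d/dx` on `ℂ((x))`. -/
def lder (f : LaurentSeries ℂ) : LaurentSeries ℂ where
  coeff n := ((n + 1 : ℤ) : ℂ) * f.coeff (n + 1)
  isPWO_support' := by
    have hsub : (Function.support fun n : ℤ => ((n + 1 : ℤ) : ℂ) * f.coeff (n + 1)) ⊆
        (fun n : ℤ => n - 1) '' f.support := by
      intro n hn
      refine ⟨n + 1, ?_, by ring⟩
      have : f.coeff (n + 1) ≠ 0 := by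
        intro h
        apply hn
        simp [Function.mem_support, h]
      simpa [HahnSeries.mem_support] using this
    exact (f.isPWO_support.image_of_monotone (fun a b hab => by simpa using hab)).mono hsub

/-- The operator `p(x) d/dx` on `ℂ((x))`. -/
def pd (p : LaurentSeries ℂ) (f : LaurentSeries ℂ) : LaurentSeries ℂ := p * lder f

/-- The divided power `(p(x) d/dx)^{(k)} = (1/k!) (p(x)d/dx)^k`. -/
def pdPow (p : LaurentSeries ℂ) (k : ℕ) (f : LaurentSeries ℂ) : LaurentSeries ℂ :=
  ((k.factorial : ℂ))⁻¹ • (pd p)^[k] f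

/-- The residue of a formal Laurent series: the coefficient of `x⁻¹`. -/
def lres (f : LaurentSeries ℂ) : ℂ := f.coeff (-1)

/-- The variable `x` of `ℂ((x))`. -/
def lx : LaurentSeries ℂ := HahnSeries.single (1 : ℤ) (1 : ℂ)

/-- The rescaling `f(x) ↦ f(μx)` on `ℂ((x))`: `Σ aₙxⁿ ↦ Σ aₙμⁿxⁿ`. -/
def lscale (μ : ℂ) (f : LaurentSeries ℂ) : LaurentSeries ℂ where
  coeff n := μ ^ n * f.coeff n
  isPWO_support' := by
    apply f.isPWO_support.mono
    intro n hn
    have : f.coeff n ≠ 0 := by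
      intro h; apply hn; simp [Function.mem_support, h]
    simpa [HahnSeries.mem_support] using this

/- Instance search finds `HahnSeries.powerSeriesAlgebra` first, whose scalar action does not unify
with `HahnSeries.instSMul`, so the corresponding facts about algebras do not apply by themselves. -/
instance laurentSeries_isScalarTower {R : Type*} [CommSemiring R] :
    IsScalarTower R (LaurentSeries R) (LaurentSeries R) :=
  @IsScalarTower.right R (LaurentSeries R) _ _ HahnSeries.instAlgebra

instance laurentSeries_smulCommClass {R : Type*} [CommSemiring R] :
    SMulCommClass R (LaurentSeries R) (LaurentSeries R) :=
  @Algebra.to_smulCommClass R (LaurentSeries R) _ _ HahnSeries.instAlgebra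

theorem coeff_lscale (c : ℂ) (f : LaurentSeries ℂ) (n : ℤ) :
    (lscale c f).coeff n = c ^ n * f.coeff n := rfl

theorem support_lscale {c : ℂ} (hc : c ≠ 0) (f : LaurentSeries ℂ) :
    (lscale c f).support = f.support := by
  ext n
  simp [coeff_lscale, zpow_ne_zero n hc]

theorem lscale_smul (c a : ℂ) (f : LaurentSeries ℂ) : lscale c (a • f) = a • lscale c f := by
  ext n
  exact mul_left_comm _ _ _

theorem lscale_mul {c : ℂ} (hc : c ≠ 0) (f g : LaurentSeries ℂ) :
    lscale c (f * g) = lscale c f * lscale c g := by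
  ext n
  rw [coeff_lscale, coeff_mul, coeff_mul, Finset.mul_sum]
  refine Finset.sum_congr (by ext; simp [support_lscale hc]) fun ij hij => ?_
  have hn : ij.1 + ij.2 = n := (Finset.mem_antidiagonal.mp hij).2.2
  rw [coeff_lscale, coeff_lscale, ← hn, zpow_add₀ hc, mul_mul_mul_comm]

theorem lscale_lx (c : ℂ) : lscale c lx = c • lx := by
  ext n
  obtain rfl | hn := eq_or_ne n 1 <;> simp [coeff_lscale, lx, *]

theorem lscale_inv_eq_iff {c : ℂ} (hc : c ≠ 0) {f g : LaurentSeries ℂ} :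
    lscale c⁻¹ f = g ↔ f = lscale c g := by
  simp only [HahnSeries.ext_iff, funext_iff, coeff_lscale, inv_zpow]
  exact forall_congr' fun n => inv_mul_eq_iff_eq_mul₀ (zpow_ne_zero n hc)

theorem lder_eq_derivative (f : LaurentSeries ℂ) : lder f = LaurentSeries.derivative ℂ f := by
  ext n
  simp [lder]

theorem lder_smul (a : ℂ) (f : LaurentSeries ℂ) : lder (a • f) = a • lder f := by
  simp only [lder_eq_derivative, map_smul]

theorem lder_lx : lder lx = 1 := by
  simp [lder_eq_derivative, lx]

theorem lscale_lder {c : ℂ} (hc : c ≠ 0) (f : LaurentSeries ℂ) :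
    lscale c (lder f) = c⁻¹ • lder (lscale c f) := by
  ext n
  simp only [lscale, lder, zpow_add_one₀ hc, coeff_smul, smul_eq_mul]
  field_simp

theorem pd_smul_left (a : ℂ) (p f : LaurentSeries ℂ) : pd (a • p) f = a • pd p f :=
  smul_mul_assoc a p (lder f)

theorem pd_smul (p : LaurentSeries ℂ) (a : ℂ) (f : LaurentSeries ℂ) :
    pd p (a • f) = a • pd p f := by
  rw [pd, lder_smul, mul_smul_comm, pd]

theorem pd_lx (p : LaurentSeries ℂ) : pd p lx = p := by
  rw [pd, lder_lx, mul_one]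

theorem semiconj_lscale_pd {c : ℂ} (hc : c ≠ 0) (p : LaurentSeries ℂ) :
    Function.Semiconj (lscale c) (pd p) (pd (c⁻¹ • lscale c p)) := fun f => by
  rw [pd_smul_left, pd, pd, lscale_mul hc, lscale_lder hc, mul_smul_comm]

theorem pdPow_smul_left (a : ℂ) (p : LaurentSeries ℂ) (k : ℕ) (f : LaurentSeries ℂ) :
    pdPow (a • p) k f = a ^ k • pdPow p k f := by
  have iterate_pd : (pd (a • p))^[k] f = a ^ k • (pd p)^[k] f := by
    induction k with
    | zero => simp
    | succ k ih =>
      simp only [Function.iterate_succ_apply', ih, pd_smul, pd_smul_left, smul_smul, pow_succ]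
  rw [pdPow, iterate_pd, smul_comm, pdPow]

theorem pdPow_smul (p : LaurentSeries ℂ) (k : ℕ) (a : ℂ) (f : LaurentSeries ℂ) :
    pdPow p k (a • f) = a • pdPow p k f := by
  have iterate_commute : Function.Commute (pd p)^[k] (a • ·) :=
    Function.Commute.iterate_left (fun g => pd_smul p a g) k
  rw [pdPow, iterate_commute f, smul_comm, pdPow]

theorem pdPow_one_lx (p : LaurentSeries ℂ) : pdPow p 1 lx = p := by
  simp [pdPow, pd_lx]

theorem lscale_pdPow {c : ℂ} (hc : c ≠ 0) (p : LaurentSeries ℂ) (k : ℕ) (f : LaurentSeries ℂ) :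
    lscale c (pdPow p k f) = pdPow (c⁻¹ • lscale c p) k (lscale c f) := by
  rw [pdPow, lscale_smul, (semiconj_lscale_pd hc p).iterate_right k f, pdPow]

/-- The series `φ(x, y) = ∑ₖ (yᵏ / k!) Dᵏ(x)` attached to `D = p(x) d/dx`, as a power series in `y`
over `ℂ((x))`. -/
def phi (p : LaurentSeries ℂ) : PowerSeries (LaurentSeries ℂ) :=
  PowerSeries.mk fun k => pdPow p k lx

theorem coeff_phi (p : LaurentSeries ℂ) (k : ℕ) : PowerSeries.coeff k (phi p) = pdPow p k lx :=
  PowerSeries.coeff_mk _ _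

theorem phi_injective : Function.Injective phi := fun p q h => by
  simpa only [coeff_phi, pdPow_one_lx] using congrArg (PowerSeries.coeff 1) h

theorem coeff_phi_smul (a : ℂ) (p : LaurentSeries ℂ) (k : ℕ) :
    PowerSeries.coeff k (phi (a • p)) = a ^ k • PowerSeries.coeff k (phi p) := by
  simp only [coeff_phi, pdPow_smul_left]

theorem coeff_phi_smul_lscale_inv {c : ℂ} (hc : c ≠ 0) (p : LaurentSeries ℂ) (k : ℕ) :
    PowerSeries.coeff k (phi (c • lscale c⁻¹ p)) =
      c • lscale c⁻¹ (PowerSeries.coeff k (phi p)) := by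
  rw [coeff_phi, coeff_phi, lscale_pdPow (inv_ne_zero hc), lscale_lx, pdPow_smul, inv_inv,
    smul_inv_smul₀ hc]

theorem smul_eq_smul_lscale_inv_iff {a c : ℂ} (ha : a ≠ 0) (hc : c ≠ 0) (p : LaurentSeries ℂ) :
    a • p = c • lscale c⁻¹ p ↔ lscale c p = (a⁻¹ * c) • p := by
  rw [eq_comm, ← lscale_smul, lscale_inv_eq_iff hc, lscale_smul, eq_comm, mul_smul,
    eq_inv_smul_iff₀ ha]

/-- for nonzero complex numbers `λ, μ`, the identity
`φ(x, μz) = λ·φ(λ⁻¹x, z)` in `ℂ((x))[[z]]` (expressed coefficientwise in `z`,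
where the `z^k`-coefficient of `φ(x,z) = Σ_k (z^k/k!) D^k(x)` is `(1/k!)(p d/dx)^k(x)`)
holds if and only if `p(λx) = μ⁻¹λ·p(x)` in `ℂ((x))`. -/
theorem phi_rescale_iff (p : LaurentSeries ℂ) (hp : p ≠ 0)
    (lam mu : ℂ) (hlam : lam ≠ 0) (hmu : mu ≠ 0) :
    (∀ k : ℕ, mu ^ k • (((k.factorial : ℂ))⁻¹ • (pd p)^[k] lx)
        = lam • lscale lam⁻¹ (((k.factorial : ℂ))⁻¹ • (pd p)^[k] lx))
      ↔ lscale lam p = (mu⁻¹ * lam) • p := by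
  calc
    _ ↔ phi (mu • p) = phi (lam • lscale lam⁻¹ p) := by
      simp only [PowerSeries.ext_iff, coeff_phi_smul, coeff_phi_smul_lscale_inv hlam]
      simp only [coeff_phi, pdPow]
    _ ↔ mu • p = lam • lscale lam⁻¹ p := phi_injective.eq_iff
    _ ↔ lscale lam p = (mu⁻¹ * lam) • p := smul_eq_smul_lscale_inv_iff hmu hlam p
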